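/- arXiv:2202.06195 — 2 statements merged into one kernel-verified Lean document; each statement's English description precedes it below -/
import Mathlib

section
/- We have ∑_{n=0}^∞ 4^n / (binom(2n, n) · (2n+1)³) = −π³/32 − (π (log 2)²)/8 + 4 · Im(∑_{n=1}^∞ ((1+i)/2)^n / n³). -/
open Real Complex

/- Write `Fₖ(x) = ∑ 4ⁿ x^(2n + 1) / (binom(2n, n) (2n + 1)^k)`, so that `Fₖ₊₁' = Fₖ / x`. The
recursion of the central binomial coefficients gives `(1 - x²) F₀ = x + x² F₁`, and the rational
substitution `x = 2t / (1 + t²)` solves the resulting equation for `F₁`: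
`(1 - t²) / (1 + t²) · F₁ = 2 arctan t`. As `dx / x = (1 - t²) / (t (1 + t²)) dt`, integrating
twice more gives `F₂ = -2 Im Li₂(-it)` and
`F₃ = -2 Im Li₃(-it) + 2 log(1 + t²) Im Li₂(-it) + 4 Im S₁,₂(-it)`, because
`log(1 + t²) arctan t = Im log²(1 + it)`. At `t = 1`, Landen's substitution `z ↦ z / (z - 1)`
expresses `S₁,₂(-i)` through `Li₃((1 + i) / 2)`, the values `Re Li₂(-i)` and `Im Li₃(-i)` come from
Bernoulli polynomials, and the contributions of Catalan's constant `-Im Li₂(-i)` cancel. -/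

theorem eq_of_hasDerivAt_eq_of_le {E : Type*} [NormedAddCommGroup E] [NormedSpace ℝ E]
    [CompleteSpace E] {f g f' : ℝ → E} {a b : ℝ} (hab : a ≤ b)
    (hf : ContinuousOn f (Set.Icc a b)) (hg : ContinuousOn g (Set.Icc a b))
    (hf' : ∀ t ∈ Set.Ioo a b, HasDerivAt f (f' t) t)
    (hg' : ∀ t ∈ Set.Ioo a b, HasDerivAt g (f' t) t) (ha : f a = g a) : f b = g b := by
  have hconst := intervalIntegral.integral_eq_sub_of_hasDerivAt_of_le hab (hf.sub hg)
    (f' := fun _ => 0) (fun t ht => by simpa using (hf' t ht).sub (hg' t ht)) (by simp)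
  simpa [ha, sub_eq_zero, eq_comm] using hconst

theorem hasDerivAt_im {f : ℝ → ℂ} {f' : ℂ} {t : ℝ} (hf : HasDerivAt f f' t) :
    HasDerivAt (fun s => (f s).im) f'.im t :=
  imCLM.hasFDerivAt.comp_hasDerivAt t hf

section WeightedPolylog

variable {ι 𝕜 : Type*} [RCLike 𝕜] {c : ι → 𝕜} {e : ι → ℕ} {r : ℝ} {z : 𝕜}

/-- The power series `∑ cᵢ z^(eᵢ + 1) / (eᵢ + 1)^k`, for which raising `k` amounts to integrating
against `dz / z`; both series of the theorem are instances. -/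
noncomputable def weightedPolylog (c : ι → 𝕜) (e : ι → ℕ) (k : ℕ) (z : 𝕜) : 𝕜 :=
  ∑' i, c i * z ^ (e i + 1) / ((e i : 𝕜) + 1) ^ k

@[simp]
theorem weightedPolylog_zero_right (c : ι → 𝕜) (e : ι → ℕ) (k : ℕ) :
    weightedPolylog c e k 0 = 0 := by
  simp [weightedPolylog]

theorem hasDerivAt_weightedPolylog_succ (k : ℕ) (hz : ‖z‖ < r)
    (hc : Summable fun i => ‖c i‖ * r ^ e i) :
    HasDerivAt (weightedPolylog c e (k + 1)) (∑' i, c i * z ^ e i / ((e i : 𝕜) + 1) ^ k) z := by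
  have hr : 0 < r := (norm_nonneg z).trans_lt hz
  refine hasDerivAt_tsum_of_isPreconnected
    (g := fun i y => c i * y ^ (e i + 1) / ((e i : 𝕜) + 1) ^ (k + 1))
    (g' := fun i y => c i * y ^ e i / ((e i : 𝕜) + 1) ^ k)
    (t := Metric.ball 0 r) (y₀ := 0) hc Metric.isOpen_ball (convex_ball 0 r).isPreconnected
    (fun i y _ => ?_) (fun i y hy => ?_) (Metric.mem_ball_self hr) (by simp) (by simpa using hz)
  · refine (((hasDerivAt_pow (e i + 1) y).const_mul (c i)).div_const _).congr_deriv ?_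
    have : (e i : 𝕜) + 1 ≠ 0 := Nat.cast_add_one_ne_zero _
    push_cast [pow_succ]
    field_simp
  · have hden : 1 ≤ ‖((e i : 𝕜) + 1) ^ k‖ := by
      rw [norm_pow, ← Nat.cast_succ, RCLike.norm_natCast]
      exact one_le_pow₀ (by simp)
    calc ‖c i * y ^ e i / ((e i : 𝕜) + 1) ^ k‖ ≤ ‖c i‖ * ‖y‖ ^ e i := by
          rw [norm_div, norm_mul, norm_pow]
          exact div_le_self (by positivity) hden
      _ ≤ ‖c i‖ * r ^ e i := by
          have : ‖y‖ ≤ r := (mem_ball_zero_iff.1 hy).le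
          gcongr

/- Phrased through the logarithmic derivative `q` of `u`, the chain rule needs no division by
`u t` and so also covers the zeros of `u`. -/
theorem hasDerivAt_weightedPolylog_comp {u : ℝ → 𝕜} {q : 𝕜} {t : ℝ} (hu : HasDerivAt u (q * u t) t)
    (k : ℕ) (hut : ‖u t‖ < r) (hc : Summable fun i => ‖c i‖ * r ^ e i) :
    HasDerivAt (fun s => weightedPolylog c e (k + 1) (u s))
      (q * weightedPolylog c e k (u t)) t := by
  refine ((hasDerivAt_weightedPolylog_succ k hut hc).comp t hu).congr_deriv ?_
  rw [mul_left_comm, weightedPolylog, ← tsum_mul_right]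
  congr 2 with i
  ring

theorem norm_weightedPolylog_term_le (c : ι → 𝕜) (e : ι → ℕ) (k : ℕ) (hz : ‖z‖ ≤ 1) (i : ι) :
    ‖c i * z ^ (e i + 1) / ((e i : 𝕜) + 1) ^ k‖ ≤ ‖c i‖ / ((e i : ℝ) + 1) ^ k := by
  have hden : ‖(e i : 𝕜) + 1‖ = (e i : ℝ) + 1 := by
    rw [← Nat.cast_succ, RCLike.norm_natCast, Nat.cast_succ]
  rw [norm_div, norm_mul, norm_pow, norm_pow, hden]
  gcongr
  exact mul_le_of_le_one_right (norm_nonneg _) (pow_le_one₀ (norm_nonneg z) hz)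

theorem continuousOn_weightedPolylog (k : ℕ)
    (hc : Summable fun i => ‖c i‖ / ((e i : ℝ) + 1) ^ k) :
    ContinuousOn (weightedPolylog c e k) (Metric.closedBall 0 1) :=
  continuousOn_tsum (fun i => by fun_prop) hc fun i _ hy =>
    norm_weightedPolylog_term_le c e k (mem_closedBall_zero_iff.1 hy) i

end WeightedPolylog

section Polylog

variable {k : ℕ} {z : ℂ}

/-- The polylogarithm `Liₖ`, defined by its power series and hence meaningful only on the unit
disc. -/
noncomputable def polylog (k : ℕ) (z : ℂ) : ℂ := weightedPolylog (fun _ : ℕ => 1) id k z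

theorem polylog_eq_tsum (k : ℕ) (z : ℂ) :
    polylog k z = ∑' n : ℕ, z ^ (n + 1) / ((n : ℂ) + 1) ^ k := by
  simp [polylog, weightedPolylog]

@[simp]
theorem polylog_zero_right (k : ℕ) : polylog k 0 = 0 := weightedPolylog_zero_right _ _ _

theorem polylog_one_left (hz : ‖z‖ < 1) : polylog 1 z = -Complex.log (1 - z) := by
  have h := Complex.hasSum_taylorSeries_neg_log hz
  rw [← h.tsum_eq, h.summable.tsum_eq_zero_add]
  simp [polylog_eq_tsum]

theorem polylog_conj (k : ℕ) (z : ℂ) :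
    polylog k ((starRingEnd ℂ) z) = (starRingEnd ℂ) (polylog k z) := by
  simp [polylog_eq_tsum, Complex.conj_tsum]

theorem hasDerivAt_polylog_comp {u : ℝ → ℂ} {q : ℂ} {t : ℝ} (hu : HasDerivAt u (q * u t) t) (k : ℕ)
    (hut : ‖u t‖ < 1) : HasDerivAt (fun s => polylog (k + 1) (u s)) (q * polylog k (u t)) t := by
  obtain ⟨r, hur, hr1⟩ := exists_between hut
  have hr0 : 0 ≤ r := (norm_nonneg _).trans hur.le
  exact hasDerivAt_weightedPolylog_comp hu k hur
    (by simpa using summable_geometric_of_lt_one hr0 hr1)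

theorem summable_one_div_add_one_pow (hk : 2 ≤ k) :
    Summable fun n : ℕ => 1 / ((n : ℝ) + 1) ^ k := by
  simpa using (summable_nat_add_iff 1).2 (Real.summable_one_div_nat_pow.2 hk)

theorem continuousOn_polylog (hk : 2 ≤ k) : ContinuousOn (polylog k) (Metric.closedBall 0 1) :=
  continuousOn_weightedPolylog k (by simpa using summable_one_div_add_one_pow hk)

theorem hasSum_polylog (hk : 2 ≤ k) (hz : ‖z‖ ≤ 1) :
    HasSum (fun n : ℕ => z ^ (n + 1) / ((n : ℂ) + 1) ^ k) (polylog k z) := by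
  rw [polylog_eq_tsum]
  refine (Summable.of_norm_bounded (summable_one_div_add_one_pow hk) fun n => ?_).hasSum
  simpa using norm_weightedPolylog_term_le (fun _ : ℕ => (1 : ℂ)) id k hz n

/- Jonquière's inversion formula on the unit circle, read off the Fourier series of
`bernoulliFun`. -/
theorem polylog_exp_add_polylog_exp_neg (hk : 2 ≤ k) {x : ℝ} (hx : x ∈ Set.Icc 0 1) :
    polylog k (cexp (2 * π * I * x)) + (-1) ^ k * polylog k (cexp (-(2 * π * I * x))) =
      -(2 * π * I) ^ k / (k.factorial : ℂ) * bernoulliFun k x := by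
  have hnorm (y : ℝ) : ‖cexp (2 * π * I * y)‖ ≤ 1 := by
    simp [Complex.norm_exp]
  have hpos := hasSum_polylog hk (hnorm x)
  have hneg := hasSum_polylog hk (z := cexp (-(2 * π * I * x))) (by simpa using hnorm (-x))
  have hfourier := hasSum_one_div_nat_pow_mul_fourier hk hx
  rw [← hasSum_nat_add_iff' 1] at hfourier
  simp only [Finset.sum_range_one, Nat.cast_zero, zero_pow (by omega : k ≠ 0), div_zero, zero_mul,
    sub_zero] at hfourier
  refine (hpos.add (hneg.mul_left _)).unique (hfourier.congr_fun fun n => ?_)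
  rw [fourier_coe_apply, fourier_coe_apply, ← Complex.exp_nat_mul, ← Complex.exp_nat_mul]
  push_cast
  ring_nf

theorem polylog_I_add_polylog_neg_I (hk : 2 ≤ k) :
    polylog k I + (-1) ^ k * polylog k (-I) =
      -(2 * π * I) ^ k / (k.factorial : ℂ) * bernoulliFun k (1 / 4) := by
  have h := polylog_exp_add_polylog_exp_neg hk (x := 1 / 4) (by norm_num)
  have harg : 2 * π * I * ((1 / 4 : ℝ) : ℂ) = π / 2 * I := by
    push_cast
    ring
  rwa [harg, Complex.exp_neg, Complex.exp_pi_div_two_mul_I, Complex.inv_I] at h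

theorem polylog_I_eq_conj (k : ℕ) : polylog k I = (starRingEnd ℂ) (polylog k (-I)) := by
  rw [← polylog_conj, map_neg, Complex.conj_I, neg_neg]

theorem polylog_two_neg_I_re : (polylog 2 (-I)).re = -(π ^ 2 / 48) := by
  have h := congrArg Complex.re (polylog_I_add_polylog_neg_I le_rfl)
  have hbern : bernoulliFun 2 (1 / 4) = -(1 / 48) := by norm_num
  have hrhs : -(2 * π * I) ^ 2 / ((Nat.factorial 2 : ℕ) : ℂ) * ((-(1 / 48) : ℝ) : ℂ) =
      ((-(π ^ 2 / 24) : ℝ) : ℂ) := by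
    rw [mul_pow, I_sq]
    push_cast [Nat.factorial]
    ring
  rw [polylog_I_eq_conj, hbern, hrhs, Complex.ofReal_re, even_two.neg_one_pow, one_mul,
    Complex.add_re, Complex.conj_re] at h
  linarith

theorem polylog_three_neg_I_im : (polylog 3 (-I)).im = -(π ^ 3 / 32) := by
  have h := congrArg Complex.im (polylog_I_add_polylog_neg_I (k := 3) (by norm_num))
  have hbern : bernoulliFun 3 (1 / 4) = 3 / 64 := by
    have := congrArg (algebraMap ℚ ℝ) Polynomial.bernoulli_three_eval_one_quarter
    rw [← Polynomial.eval₂_at_apply, ← Polynomial.eval_map] at this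
    simpa [bernoulliFun] using this
  have hrhs : -(2 * π * I) ^ 3 / ((Nat.factorial 3 : ℕ) : ℂ) * ((3 / 64 : ℝ) : ℂ) =
      ((π ^ 3 / 16 : ℝ) : ℂ) * I := by
    rw [mul_pow, I_pow_three]
    push_cast [Nat.factorial]
    ring
  rw [polylog_I_eq_conj, hbern, hrhs, Complex.im_ofReal_mul, Complex.I_im,
    Odd.neg_one_pow (by decide), neg_one_mul, Complex.add_im, Complex.conj_im, Complex.neg_im] at h
  linarith

end Polylog

section Landen

variable {k : ℕ} {z : ℂ} {t : ℝ}

theorem one_sub_mem_slitPlane (hz : z.re < 1) : 1 - z ∈ slitPlane := by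
  left
  simpa using hz

theorem sub_one_ne_zero_of_re_lt_one (hz : z.re < 1) : z - 1 ≠ 0 := fun h => by
  simp [sub_eq_zero.1 h] at hz

theorem norm_div_sub_one_lt_one (hz : z.re < 1 / 2) : ‖z / (z - 1)‖ < 1 := by
  have hne := sub_one_ne_zero_of_re_lt_one (hz.trans one_half_lt_one)
  rw [norm_div, div_lt_one (norm_pos_iff.2 hne), ← sq_lt_sq₀ (norm_nonneg _) (norm_nonneg _),
    Complex.sq_norm, Complex.sq_norm, Complex.normSq_apply, Complex.normSq_apply]
  simp only [sub_re, sub_im, one_re, one_im]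
  linarith

theorem log_one_sub_div_sub_one (hz : z.re < 1) :
    Complex.log (1 - z / (z - 1)) = -Complex.log (1 - z) := by
  have hslit := one_sub_mem_slitPlane hz
  have hne := sub_one_ne_zero_of_re_lt_one hz
  rw [← Complex.log_inv _ (mem_slitPlane_iff_arg.1 hslit).1]
  congr 1
  rw [one_sub_div hne, ← neg_sub z 1, inv_neg, sub_sub_cancel_left, neg_div, one_div]

theorem hasDerivAt_ofReal_mul (z : ℂ) (t : ℝ) : HasDerivAt (fun s : ℝ => (s : ℂ) * z) z t := by
  simpa using (hasDerivAt_id t).ofReal_comp.mul_const z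

theorem hasDerivAt_log_one_sub (ht : (t * z).re < 1) :
    HasDerivAt (fun s : ℝ => Complex.log (1 - s * z)) (-z / (1 - t * z)) t :=
  ((hasDerivAt_ofReal_mul z t).const_sub 1).clog_real (one_sub_mem_slitPlane ht)

theorem hasDerivAt_polylog_ofReal_mul (k : ℕ) (ht0 : t ≠ 0) (ht : ‖t * z‖ < 1) :
    HasDerivAt (fun s : ℝ => polylog (k + 1) (s * z)) (polylog k (t * z) / t) t := by
  have ht_ne : (t : ℂ) ≠ 0 := ofReal_ne_zero.2 ht0
  have hlog : HasDerivAt (fun s : ℝ => (s : ℂ) * z) ((t : ℂ)⁻¹ * (t * z)) t := by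
    simpa [ht_ne] using hasDerivAt_ofReal_mul z t
  simpa [div_eq_inv_mul] using hasDerivAt_polylog_comp hlog k ht

theorem hasDerivAt_polylog_div_sub_one (k : ℕ) (ht0 : t ≠ 0) (ht : (t * z).re < 1 / 2) :
    HasDerivAt (fun s : ℝ => polylog (k + 1) (s * z / (s * z - 1)))
      (polylog k (t * z / (t * z - 1)) / (t * (1 - t * z))) t := by
  have ht_ne : (t : ℂ) ≠ 0 := ofReal_ne_zero.2 ht0
  have : (1 : ℂ) - t * z ≠ 0 := slitPlane_ne_zero (one_sub_mem_slitPlane (by linarith))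
  have hsub_one := sub_one_ne_zero_of_re_lt_one (ht.trans one_half_lt_one)
  have hu := hasDerivAt_ofReal_mul z t
  have hlog : HasDerivAt (fun s : ℝ => (s : ℂ) * z / (s * z - 1))
      ((t * (1 - t * z) : ℂ)⁻¹ * (t * z / (t * z - 1))) t := by
    refine (hu.div (hu.sub_const 1) hsub_one).congr_deriv ?_
    rw [← neg_sub (t * z : ℂ) 1]
    field_simp
    ring
  simpa [div_eq_inv_mul] using hasDerivAt_polylog_comp hlog k (norm_div_sub_one_lt_one ht)

theorem norm_ofReal_mul_le_abs (t : ℝ) (hz : ‖z‖ ≤ 1) : ‖t * z‖ ≤ |t| := by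
  rw [norm_mul, Complex.norm_real, Real.norm_eq_abs]
  exact mul_le_of_le_one_right (abs_nonneg t) hz

theorem norm_ofReal_mul_lt_one (hz : ‖z‖ ≤ 1) (ht : t ∈ Set.Ioo 0 1) : ‖t * z‖ < 1 :=
  (norm_ofReal_mul_le_abs t hz).trans_lt (by rw [abs_of_pos ht.1]; exact ht.2)

theorem ofReal_mul_re_lt {a : ℝ} (ha : 0 < a) (hz : z.re < a) (ht : t ∈ Set.Icc 0 1) :
    (t * z).re < a := by
  rw [re_ofReal_mul]
  rcases le_or_gt z.re 0 with hneg | hpos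
  · exact (mul_nonpos_of_nonneg_of_nonpos ht.1 hneg).trans_lt ha
  · exact (mul_le_of_le_one_left hpos.le ht.2).trans_lt hz

theorem continuousOn_polylog_ofReal_mul (hk : 2 ≤ k) (hz : ‖z‖ ≤ 1) :
    ContinuousOn (fun t : ℝ => polylog k (t * z)) (Set.Icc 0 1) :=
  (continuousOn_polylog hk).comp (f := fun t : ℝ => (t : ℂ) * z) (by fun_prop) fun t ht =>
    mem_closedBall_zero_iff.2 <| (norm_ofReal_mul_le_abs t hz).trans (by
      rw [abs_of_nonneg ht.1]; exact ht.2)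

theorem continuousOn_polylog_div_sub_one (hk : 2 ≤ k) (hz : z.re < 1 / 2) :
    ContinuousOn (fun t : ℝ => polylog k (t * z / (t * z - 1))) (Set.Icc 0 1) := by
  have hre {t : ℝ} (ht : t ∈ Set.Icc 0 1) := ofReal_mul_re_lt one_half_pos hz ht
  exact (continuousOn_polylog hk).comp (f := fun t : ℝ => (t : ℂ) * z / (t * z - 1))
    (ContinuousOn.div (by fun_prop) (by fun_prop) fun t ht =>
      sub_one_ne_zero_of_re_lt_one ((hre ht).trans one_half_lt_one))
    fun t ht => mem_closedBall_zero_iff.2 (norm_div_sub_one_lt_one (hre ht)).le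

theorem continuousOn_log_one_sub (hz : z.re < 1) :
    ContinuousOn (fun t : ℝ => Complex.log (1 - t * z)) (Set.Icc 0 1) := fun _ ht =>
  (hasDerivAt_log_one_sub (ofReal_mul_re_lt one_pos hz ht)).continuousAt.continuousWithinAt

theorem polylog_two_add_polylog_two_div_sub_one (hz : ‖z‖ ≤ 1) (hre : z.re < 1 / 2) :
    polylog 2 z + polylog 2 (z / (z - 1)) = -(Complex.log (1 - z) ^ 2 / 2) := by
  have hre1 : z.re < 1 := hre.trans one_half_lt_one
  have heq := eq_of_hasDerivAt_eq_of_le zero_le_one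
    (f := fun t : ℝ => polylog 2 (t * z) + polylog 2 (t * z / (t * z - 1)))
    (g := fun t : ℝ => -(Complex.log (1 - t * z) ^ 2 / 2))
    (f' := fun t => Complex.log (1 - t * z) * z / (1 - t * z))
    ((continuousOn_polylog_ofReal_mul le_rfl hz).add (continuousOn_polylog_div_sub_one le_rfl hre))
    (((continuousOn_log_one_sub hre1).pow 2).div_const 2).neg (fun t ht => ?_) (fun t ht => ?_)
    (by simp)
  · simpa using heq
  · have ht' := Set.Ioo_subset_Icc_self ht
    have hnorm := norm_ofReal_mul_lt_one hz ht
    have hret := ofReal_mul_re_lt one_half_pos hre ht'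
    have hret1 := ofReal_mul_re_lt one_pos hre1 ht'
    have ht_ne : (t : ℂ) ≠ 0 := ofReal_ne_zero.2 ht.1.ne'
    have hone_sub : (1 : ℂ) - t * z ≠ 0 := slitPlane_ne_zero (one_sub_mem_slitPlane hret1)
    refine ((hasDerivAt_polylog_ofReal_mul 1 ht.1.ne' hnorm).add
      (hasDerivAt_polylog_div_sub_one 1 ht.1.ne' hret)).congr_deriv ?_
    rw [polylog_one_left hnorm, polylog_one_left (norm_div_sub_one_lt_one hret),
      log_one_sub_div_sub_one hret1]
    field_simp
    ring
  · have hret1 := ofReal_mul_re_lt one_pos hre1 (Set.Ioo_subset_Icc_self ht)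
    refine (((hasDerivAt_log_one_sub hret1).pow 2).div_const 2).fun_neg.congr_deriv ?_
    simp only [Nat.cast_ofNat, Nat.add_one_sub_one, pow_one]
    ring

/-- Nielsen's polylogarithm `S₁,₂(z) = ½ ∫₀¹ log²(1 - xz) / x dx` for `‖z‖ ≤ 1`, `re z < 1/2`, in
the closed form supplied by Landen's identity for the trilogarithm; the integral enters only through
`hasDerivAt_nielsenPolylog_ofReal_mul`. -/
noncomputable def nielsenPolylog (z : ℂ) : ℂ :=
  polylog 3 z + polylog 3 (z / (z - 1)) - Complex.log (1 - z) * polylog 2 z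
    - Complex.log (1 - z) ^ 3 / 6

theorem nielsenPolylog_zero : nielsenPolylog 0 = 0 := by simp [nielsenPolylog]

theorem continuousOn_nielsenPolylog_ofReal_mul (hz : ‖z‖ ≤ 1) (hre : z.re < 1 / 2) :
    ContinuousOn (fun t : ℝ => nielsenPolylog (t * z)) (Set.Icc 0 1) := by
  have hlog := continuousOn_log_one_sub (hre.trans one_half_lt_one)
  exact (((continuousOn_polylog_ofReal_mul (by norm_num) hz).add
    (continuousOn_polylog_div_sub_one (by norm_num) hre)).sub
    (hlog.mul (continuousOn_polylog_ofReal_mul le_rfl hz))).sub ((hlog.pow 3).div_const 6)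

theorem hasDerivAt_nielsenPolylog_ofReal_mul (ht0 : t ≠ 0) (ht : ‖t * z‖ < 1)
    (hre : (t * z).re < 1 / 2) :
    HasDerivAt (fun s : ℝ => nielsenPolylog (s * z)) (Complex.log (1 - t * z) ^ 2 / (2 * t)) t := by
  have hre1 : (t * z).re < 1 := hre.trans one_half_lt_one
  have ht_ne : (t : ℂ) ≠ 0 := ofReal_ne_zero.2 ht0
  have hone_sub : (1 : ℂ) - t * z ≠ 0 := slitPlane_ne_zero (one_sub_mem_slitPlane hre1)
  have hlog := hasDerivAt_log_one_sub hre1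
  have hlanden : polylog 2 (t * z / (t * z - 1)) =
      -(Complex.log (1 - t * z) ^ 2 / 2) - polylog 2 (t * z) :=
    eq_sub_of_add_eq' (polylog_two_add_polylog_two_div_sub_one ht.le hre)
  refine ((((hasDerivAt_polylog_ofReal_mul 2 ht0 ht).add
    (hasDerivAt_polylog_div_sub_one 2 ht0 hre)).sub
    (hlog.mul (hasDerivAt_polylog_ofReal_mul 1 ht0 ht))).sub
    ((hlog.pow 3).div_const 6)).congr_deriv ?_
  rw [hlanden, polylog_one_left ht]
  simp only [Nat.cast_ofNat, Nat.add_one_sub_one]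
  field_simp
  ring

end Landen

section CentralBinom

variable {k : ℕ} {x : ℝ}

/-- The coefficients `4ⁿ / binom(2n, n)` of the series of the theorem. -/
noncomputable def fourPowDivCentralBinom (n : ℕ) : ℝ := 4 ^ n / n.centralBinom

theorem fourPowDivCentralBinom_nonneg (n : ℕ) : 0 ≤ fourPowDivCentralBinom n := by
  unfold fourPowDivCentralBinom
  positivity

theorem fourPowDivCentralBinom_le (n : ℕ) : fourPowDivCentralBinom n ≤ 2 * n + 1 := by
  rcases n.eq_zero_or_pos with rfl | hn
  · simp [fourPowDivCentralBinom]
  have hcb : (0 : ℝ) < n.centralBinom := Nat.cast_pos.2 n.centralBinom_pos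
  have hle : (4 : ℝ) ^ n ≤ 2 * n * n.centralBinom := by
    exact_mod_cast Nat.four_pow_le_two_mul_self_mul_centralBinom n hn
  rw [fourPowDivCentralBinom, div_le_iff₀ hcb]
  linarith

theorem fourPowDivCentralBinom_succ_sub (n : ℕ) :
    fourPowDivCentralBinom (n + 1) - fourPowDivCentralBinom n =
      fourPowDivCentralBinom n / (2 * n + 1) := by
  have hcb : (n.centralBinom : ℝ) ≠ 0 := Nat.cast_ne_zero.2 n.centralBinom_ne_zero
  have hcb' : ((n + 1).centralBinom : ℝ) ≠ 0 := Nat.cast_ne_zero.2 (n + 1).centralBinom_ne_zero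
  have hn : (2 * n + 1 : ℝ) ≠ 0 := by positivity
  have hrec : ((n : ℝ) + 1) * (n + 1).centralBinom = 2 * (2 * n + 1) * n.centralBinom := by
    exact_mod_cast Nat.succ_mul_centralBinom_succ n
  unfold fourPowDivCentralBinom
  field_simp
  linear_combination (-2 * 4 ^ n : ℝ) * hrec

theorem summable_norm_fourPowDivCentralBinom_mul_pow (hx0 : 0 ≤ x) (hx1 : x < 1) :
    Summable fun n => ‖fourPowDivCentralBinom n‖ * x ^ (2 * n) := by
  have hsq : x ^ 2 < 1 := pow_lt_one₀ hx0 hx1 two_ne_zero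
  have hlin := summable_pow_mul_geometric_of_norm_lt_one (R := ℝ) 1 (r := x ^ 2)
    (by rwa [Real.norm_of_nonneg (sq_nonneg x)])
  have hgeom := summable_geometric_of_lt_one (sq_nonneg x) hsq
  refine Summable.of_nonneg_of_le (fun n => by positivity) (fun n => ?_)
    ((hlin.mul_left 2).add hgeom)
  calc ‖fourPowDivCentralBinom n‖ * x ^ (2 * n) ≤ (2 * n + 1) * x ^ (2 * n) := by
        rw [Real.norm_of_nonneg (fourPowDivCentralBinom_nonneg n)]
        gcongr
        exact fourPowDivCentralBinom_le n
    _ = 2 * ((n : ℝ) ^ 1 * (x ^ 2) ^ n) + (x ^ 2) ^ n := by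
        rw [pow_mul]
        ring

/-- The series `∑ 4ⁿ x^(2n + 1) / (binom(2n, n) (2n + 1)^k)`; its value at `k = 3`, `x = 1` is the
left-hand side of the theorem. -/
noncomputable def centralBinomPolylog (k : ℕ) (x : ℝ) : ℝ :=
  weightedPolylog fourPowDivCentralBinom (fun n => 2 * n) k x

@[simp]
theorem centralBinomPolylog_zero_right (k : ℕ) : centralBinomPolylog k 0 = 0 :=
  weightedPolylog_zero_right _ _ _

theorem hasDerivAt_centralBinomPolylog_comp {u : ℝ → ℝ} {q t : ℝ} (hu : HasDerivAt u (q * u t) t)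
    (k : ℕ) (hut : |u t| < 1) :
    HasDerivAt (fun s => centralBinomPolylog (k + 1) (u s))
      (q * centralBinomPolylog k (u t)) t := by
  obtain ⟨r, hur, hr1⟩ := exists_between hut
  exact hasDerivAt_weightedPolylog_comp hu k hur
    (summable_norm_fourPowDivCentralBinom_mul_pow ((abs_nonneg _).trans hur.le) hr1)

theorem continuousAt_centralBinomPolylog_succ (k : ℕ) (hx : |x| < 1) :
    ContinuousAt (centralBinomPolylog (k + 1)) x := by
  obtain ⟨r, hxr, hr1⟩ := exists_between hx
  exact (hasDerivAt_weightedPolylog_succ k hxr (summable_norm_fourPowDivCentralBinom_mul_pow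
    ((abs_nonneg _).trans hxr.le) hr1)).continuousAt

theorem summable_norm_fourPowDivCentralBinom_div_pow (hk : 3 ≤ k) :
    Summable fun n : ℕ => ‖fourPowDivCentralBinom n‖ / (((2 * n : ℕ) : ℝ) + 1) ^ k := by
  refine Summable.of_nonneg_of_le (fun n => by positivity) (fun n => ?_)
    (summable_one_div_add_one_pow (k := 2) le_rfl)
  obtain ⟨j, rfl⟩ := Nat.exists_eq_add_of_le' hk
  have hn : (1 : ℝ) ≤ 2 * n + 1 := by linarith [n.cast_nonneg (α := ℝ)]
  rw [Real.norm_of_nonneg (fourPowDivCentralBinom_nonneg n)]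
  push_cast
  calc fourPowDivCentralBinom n / (2 * n + 1 : ℝ) ^ (j + 3)
      ≤ (2 * n + 1) / (2 * n + 1 : ℝ) ^ 3 := by
        gcongr
        exact fourPowDivCentralBinom_le n
    _ = 1 / (2 * n + 1 : ℝ) ^ 2 := by field_simp
    _ ≤ 1 / (n + 1 : ℝ) ^ 2 := by
        gcongr
        linarith [n.cast_nonneg (α := ℝ)]

theorem continuousOn_centralBinomPolylog (hk : 3 ≤ k) :
    ContinuousOn (centralBinomPolylog k) (Set.Icc (-1) 1) := by
  rw [← Real.closedBall_zero_eq_Icc]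
  exact continuousOn_weightedPolylog k (summable_norm_fourPowDivCentralBinom_div_pow hk)

theorem one_sub_sq_mul_centralBinomPolylog_zero (hx : |x| < 1) :
    (1 - x ^ 2) * centralBinomPolylog 0 x = x + x ^ 2 * centralBinomPolylog 1 x := by
  have hsum : Summable fun n => fourPowDivCentralBinom n * x ^ (2 * n + 1) := by
    have heven : Summable fun n => fourPowDivCentralBinom n * x ^ (2 * n) :=
      (summable_norm_fourPowDivCentralBinom_mul_pow (abs_nonneg x) hx).of_norm_bounded
        fun n => by rw [norm_mul, norm_pow, Real.norm_eq_abs x]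
    simpa only [pow_succ, mul_assoc] using heven.mul_right x
  have hshift : x ^ 2 * centralBinomPolylog 1 x =
      ∑' n : ℕ, (fourPowDivCentralBinom (n + 1) * x ^ (2 * (n + 1) + 1) -
        x ^ 2 * (fourPowDivCentralBinom n * x ^ (2 * n + 1))) := by
    rw [centralBinomPolylog, weightedPolylog, ← tsum_mul_left]
    congr 1 with n
    push_cast
    rw [pow_one, mul_div_right_comm, ← fourPowDivCentralBinom_succ_sub]
    ring
  have hzero : ∑' n, fourPowDivCentralBinom n * x ^ (2 * n + 1) =
      x + ∑' n, fourPowDivCentralBinom (n + 1) * x ^ (2 * (n + 1) + 1) := by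
    simpa [fourPowDivCentralBinom] using hsum.tsum_eq_zero_add
  have hF0 : centralBinomPolylog 0 x = ∑' n, fourPowDivCentralBinom n * x ^ (2 * n + 1) := by
    simp [centralBinomPolylog, weightedPolylog]
  rw [hshift, Summable.tsum_sub ((summable_nat_add_iff 1).2 hsum) (hsum.mul_left _), tsum_mul_left,
    hF0]
  linear_combination hzero

end CentralBinom

section RationalSubstitution

variable {k : ℕ} {t : ℝ}

theorem hasDerivAt_two_mul_div_one_add_sq (ht0 : t ≠ 0) :
    HasDerivAt (fun s : ℝ => 2 * s / (1 + s ^ 2))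
      ((1 - t ^ 2) / (t * (1 + t ^ 2)) * (2 * t / (1 + t ^ 2))) t := by
  have hden : 1 + t ^ 2 ≠ 0 := by positivity
  refine (((hasDerivAt_id' t).const_mul 2).div ((hasDerivAt_pow 2 t).const_add 1) hden).congr_deriv
    ?_
  push_cast
  field_simp
  ring

theorem hasDerivAt_one_sub_sq_div_one_add_sq (t : ℝ) :
    HasDerivAt (fun s : ℝ => (1 - s ^ 2) / (1 + s ^ 2)) (-4 * t / (1 + t ^ 2) ^ 2) t := by
  refine (((hasDerivAt_pow 2 t).const_sub 1).div ((hasDerivAt_pow 2 t).const_add 1)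
    (by positivity)).congr_deriv ?_
  push_cast
  ring

theorem continuous_two_mul_div_one_add_sq : Continuous fun s : ℝ => 2 * s / (1 + s ^ 2) :=
  Continuous.div (by fun_prop) (by fun_prop) fun s => by positivity

theorem abs_two_mul_div_one_add_sq_lt_one (ht : |t| < 1) : |2 * t / (1 + t ^ 2)| < 1 := by
  rw [abs_div, abs_of_pos (by positivity : 0 < 1 + t ^ 2), div_lt_one (by positivity), abs_mul,
    abs_two, ← sq_abs]
  nlinarith

theorem two_mul_div_one_add_sq_mem_Icc (t : ℝ) : 2 * t / (1 + t ^ 2) ∈ Set.Icc (-1) 1 := by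
  have hden : 0 < 1 + t ^ 2 := by positivity
  rw [Set.mem_Icc, le_div_iff₀ hden, div_le_one hden]
  constructor <;> nlinarith [sq_nonneg (t - 1), sq_nonneg (t + 1)]

theorem abs_lt_one_of_mem_Ico (ht : t ∈ Set.Ico 0 1) : |t| < 1 := by
  rw [abs_of_nonneg ht.1]
  exact ht.2

theorem continuousOn_centralBinomPolylog_two_mul_div_one_add_sq (k : ℕ) (ht : t ∈ Set.Ico 0 1) :
    ContinuousOn (fun s => centralBinomPolylog (k + 1) (2 * s / (1 + s ^ 2))) (Set.Icc 0 t) :=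
  fun _ hs => ((continuousAt_centralBinomPolylog_succ k (abs_two_mul_div_one_add_sq_lt_one
    (abs_lt_one_of_mem_Ico ⟨hs.1, hs.2.trans_lt ht.2⟩))).comp
    (f := fun s : ℝ => 2 * s / (1 + s ^ 2))
    continuous_two_mul_div_one_add_sq.continuousAt).continuousWithinAt

theorem hasDerivAt_centralBinomPolylog_two_mul_div_one_add_sq (k : ℕ) (ht : t ∈ Set.Ioo 0 1) :
    HasDerivAt (fun s => centralBinomPolylog (k + 1) (2 * s / (1 + s ^ 2)))
      ((1 - t ^ 2) / (t * (1 + t ^ 2)) * centralBinomPolylog k (2 * t / (1 + t ^ 2))) t :=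
  hasDerivAt_centralBinomPolylog_comp (hasDerivAt_two_mul_div_one_add_sq ht.1.ne') k
    (abs_two_mul_div_one_add_sq_lt_one (abs_lt_one_of_mem_Ico (Set.Ioo_subset_Ico_self ht)))

theorem centralBinomPolylog_one_two_mul_div_one_add_sq (ht : t ∈ Set.Ico 0 1) :
    (1 - t ^ 2) / (1 + t ^ 2) * centralBinomPolylog 1 (2 * t / (1 + t ^ 2)) =
      2 * Real.arctan t := by
  refine eq_of_hasDerivAt_eq_of_le ht.1 (f' := fun s => 2 / (1 + s ^ 2))
    (f := fun s => (1 - s ^ 2) / (1 + s ^ 2) * centralBinomPolylog 1 (2 * s / (1 + s ^ 2)))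
    (g := fun s => 2 * Real.arctan s)
    (.mul (.div (by fun_prop) (by fun_prop) fun s _ => by positivity)
      (continuousOn_centralBinomPolylog_two_mul_div_one_add_sq 0 ht))
    (by fun_prop) (fun s hs => ?_) (fun s _ => ?_) (by simp)
  · have hs' : s ∈ Set.Ioo 0 1 := ⟨hs.1, hs.2.trans ht.2⟩
    have hs0 : s ≠ 0 := hs.1.ne'
    have hden : 1 + s ^ 2 ≠ 0 := by positivity
    have hode := one_sub_sq_mul_centralBinomPolylog_zero (abs_two_mul_div_one_add_sq_lt_one
      (abs_lt_one_of_mem_Ico (Set.Ioo_subset_Ico_self hs')))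
    refine ((hasDerivAt_one_sub_sq_div_one_add_sq s).mul
      (hasDerivAt_centralBinomPolylog_two_mul_div_one_add_sq 0 hs')).congr_deriv ?_
    have hsq : 1 - (2 * s / (1 + s ^ 2)) ^ 2 = ((1 - s ^ 2) / (1 + s ^ 2)) ^ 2 := by
      field_simp
      ring
    rw [hsq] at hode
    generalize centralBinomPolylog 0 (2 * s / (1 + s ^ 2)) = F₀ at *
    generalize centralBinomPolylog 1 (2 * s / (1 + s ^ 2)) = F₁ at *
    field_simp at hode ⊢
    linear_combination hode
  · exact ((hasDerivAt_arctan s).const_mul 2).congr_deriv (by ring)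

theorem log_one_sub_ofReal_mul_neg_I (t : ℝ) :
    Complex.log (1 - t * -I) = ((Real.log (1 + t ^ 2) / 2 : ℝ) : ℂ) + (Real.arctan t : ℝ) * I := by
  have hpos : 0 < 1 + t ^ 2 := by positivity
  have hexp : (1 - t * -I : ℂ) =
      cexp (((Real.log (1 + t ^ 2) / 2 : ℝ) : ℂ) + (Real.arctan t : ℝ) * I) := by
    have hsqrt : Real.exp (Real.log (1 + t ^ 2) / 2) = √(1 + t ^ 2) := by
      rw [← Real.log_sqrt hpos.le, Real.exp_log (Real.sqrt_pos.2 hpos)]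
    have hne : ((√(1 + t ^ 2) : ℝ) : ℂ) ≠ 0 := ofReal_ne_zero.2 (Real.sqrt_pos.2 hpos).ne'
    rw [Complex.exp_add_mul_I, ← ofReal_exp, hsqrt, ← ofReal_cos, ← ofReal_sin, Real.cos_arctan,
      Real.sin_arctan]
    push_cast
    field_simp
    ring
  have him : (((Real.log (1 + t ^ 2) / 2 : ℝ) : ℂ) + (Real.arctan t : ℝ) * I).im =
      Real.arctan t := by
    simp [-ofReal_arctan]
  rw [hexp]
  refine Complex.log_exp ?_ ?_ <;> rw [him]
  · linarith [neg_pi_div_two_lt_arctan t, Real.pi_pos]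
  · linarith [arctan_lt_pi_div_two t, Real.pi_pos]

theorem log_one_sub_ofReal_mul_neg_I_re (t : ℝ) :
    (Complex.log (1 - t * -I)).re = Real.log (1 + t ^ 2) / 2 := by
  simp [log_one_sub_ofReal_mul_neg_I, -neg_mul, -mul_neg, -ofReal_arctan]

theorem log_one_sub_ofReal_mul_neg_I_im (t : ℝ) :
    (Complex.log (1 - t * -I)).im = Real.arctan t := by
  simp [log_one_sub_ofReal_mul_neg_I, -neg_mul, -mul_neg, -ofReal_arctan]

theorem norm_neg_I_le_one : ‖-I‖ ≤ 1 := by simp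

theorem hasDerivAt_polylog_ofReal_mul_neg_I_im (k : ℕ) (ht : t ∈ Set.Ioo 0 1) :
    HasDerivAt (fun s : ℝ => (polylog (k + 1) (s * -I)).im) ((polylog k (t * -I)).im / t) t := by
  simpa only [Complex.div_ofReal_im] using hasDerivAt_im
    (hasDerivAt_polylog_ofReal_mul k ht.1.ne' (norm_ofReal_mul_lt_one norm_neg_I_le_one ht))

theorem continuousOn_polylog_ofReal_mul_neg_I_im (hk : 2 ≤ k) (ht : t ≤ 1) :
    ContinuousOn (fun s : ℝ => (polylog k (s * -I)).im) (Set.Icc 0 t) :=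
  continuous_im.comp_continuousOn ((continuousOn_polylog_ofReal_mul hk norm_neg_I_le_one).mono
    (Set.Icc_subset_Icc_right ht))

theorem polylog_one_ofReal_mul_neg_I_im (ht : t ∈ Set.Ioo 0 1) :
    (polylog 1 (t * -I)).im = -Real.arctan t := by
  rw [polylog_one_left (norm_ofReal_mul_lt_one norm_neg_I_le_one ht), Complex.neg_im,
    log_one_sub_ofReal_mul_neg_I_im]

theorem centralBinomPolylog_two_two_mul_div_one_add_sq (ht : t ∈ Set.Ico 0 1) :
    centralBinomPolylog 2 (2 * t / (1 + t ^ 2)) = -2 * (polylog 2 (t * -I)).im := by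
  refine eq_of_hasDerivAt_eq_of_le ht.1 (f' := fun s => 2 * Real.arctan s / s)
    (f := fun s => centralBinomPolylog 2 (2 * s / (1 + s ^ 2)))
    (g := fun s => -2 * (polylog 2 (s * -I)).im)
    (continuousOn_centralBinomPolylog_two_mul_div_one_add_sq 1 ht)
    ((continuousOn_polylog_ofReal_mul_neg_I_im le_rfl ht.2.le).const_mul (-2))
    (fun s hs => ?_) (fun s hs => ?_) (by simp)
  · have hs' : s ∈ Set.Ioo 0 1 := ⟨hs.1, hs.2.trans ht.2⟩
    refine (hasDerivAt_centralBinomPolylog_two_mul_div_one_add_sq 1 hs').congr_deriv ?_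
    rw [← centralBinomPolylog_one_two_mul_div_one_add_sq (Set.Ioo_subset_Ico_self hs'),
      div_mul_eq_div_div_swap, div_mul_eq_mul_div]
  · have hs' : s ∈ Set.Ioo 0 1 := ⟨hs.1, hs.2.trans ht.2⟩
    refine ((hasDerivAt_polylog_ofReal_mul_neg_I_im 1 hs').const_mul (-2)).congr_deriv ?_
    rw [polylog_one_ofReal_mul_neg_I_im hs']
    ring

theorem hasDerivAt_log_one_add_sq (t : ℝ) :
    HasDerivAt (fun s : ℝ => Real.log (1 + s ^ 2)) (2 * t / (1 + t ^ 2)) t := by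
  simpa using ((hasDerivAt_pow 2 t).const_add 1).log (by positivity)

theorem hasDerivAt_nielsenPolylog_ofReal_mul_neg_I_im (ht : t ∈ Set.Ioo 0 1) :
    HasDerivAt (fun s : ℝ => (nielsenPolylog (s * -I)).im)
      (Real.log (1 + t ^ 2) * Real.arctan t / (2 * t)) t := by
  refine (hasDerivAt_im (hasDerivAt_nielsenPolylog_ofReal_mul ht.1.ne'
    (norm_ofReal_mul_lt_one norm_neg_I_le_one ht) (by simp))).congr_deriv ?_
  rw [← ofReal_ofNat 2, ← ofReal_mul, Complex.div_ofReal_im, sq, Complex.mul_im,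
    log_one_sub_ofReal_mul_neg_I_re, log_one_sub_ofReal_mul_neg_I_im]
  ring

theorem centralBinomPolylog_three_two_mul_div_one_add_sq (ht : t ∈ Set.Icc 0 1) :
    centralBinomPolylog 3 (2 * t / (1 + t ^ 2)) =
      -2 * (polylog 3 (t * -I)).im + 2 * Real.log (1 + t ^ 2) * (polylog 2 (t * -I)).im
        + 4 * (nielsenPolylog (t * -I)).im := by
  have hS : ContinuousOn (fun s : ℝ => (nielsenPolylog (s * -I)).im) (Set.Icc 0 t) :=
    continuous_im.comp_continuousOn ((continuousOn_nielsenPolylog_ofReal_mul norm_neg_I_le_one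
      (by simp)).mono (Set.Icc_subset_Icc_right ht.2))
  have hlog : ContinuousOn (fun s : ℝ => 2 * Real.log (1 + s ^ 2)) (Set.Icc 0 t) := fun s _ =>
    ((hasDerivAt_log_one_add_sq s).const_mul 2).continuousAt.continuousWithinAt
  refine eq_of_hasDerivAt_eq_of_le ht.1
    (f := fun s => centralBinomPolylog 3 (2 * s / (1 + s ^ 2)))
    (g := fun s => -2 * (polylog 3 (s * -I)).im + 2 * Real.log (1 + s ^ 2) * (polylog 2 (s * -I)).im
      + 4 * (nielsenPolylog (s * -I)).im)
    (f' := fun s => (1 - s ^ 2) / (s * (1 + s ^ 2)) * (-2 * (polylog 2 (s * -I)).im))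
    ((continuousOn_centralBinomPolylog le_rfl).comp
      continuous_two_mul_div_one_add_sq.continuousOn fun s _ => two_mul_div_one_add_sq_mem_Icc s)
    ((((continuousOn_polylog_ofReal_mul_neg_I_im (by norm_num) ht.2).const_mul (-2)).add
      (hlog.mul (continuousOn_polylog_ofReal_mul_neg_I_im le_rfl ht.2))).add (hS.const_mul 4))
    (fun s hs => ?_) (fun s hs => ?_) (by simp [nielsenPolylog_zero])
  · have hs' : s ∈ Set.Ioo 0 1 := ⟨hs.1, hs.2.trans_le ht.2⟩
    rw [← centralBinomPolylog_two_two_mul_div_one_add_sq (Set.Ioo_subset_Ico_self hs')]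
    exact hasDerivAt_centralBinomPolylog_two_mul_div_one_add_sq 2 hs'
  · have hs' : s ∈ Set.Ioo 0 1 := ⟨hs.1, hs.2.trans_le ht.2⟩
    have hs0 : s ≠ 0 := hs.1.ne'
    have hden : 1 + s ^ 2 ≠ 0 := by positivity
    refine ((((hasDerivAt_polylog_ofReal_mul_neg_I_im 2 hs').const_mul (-2)).add
      (((hasDerivAt_log_one_add_sq s).const_mul 2).mul
        (hasDerivAt_polylog_ofReal_mul_neg_I_im 1 hs'))).add
      ((hasDerivAt_nielsenPolylog_ofReal_mul_neg_I_im hs').const_mul 4)).congr_deriv ?_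
    rw [polylog_one_ofReal_mul_neg_I_im hs']
    field_simp
    ring

theorem log_one_sub_neg_I :
    Complex.log (1 - -I) = ((Real.log 2 / 2 : ℝ) : ℂ) + (π / 4 : ℝ) * I := by
  have h := log_one_sub_ofReal_mul_neg_I 1
  rwa [ofReal_one, one_mul, Real.arctan_one, one_pow, one_add_one_eq_two] at h

theorem nielsenPolylog_neg_I_im :
    (nielsenPolylog (-I)).im = -(π ^ 3 * (3 / 128)) - π * Real.log 2 ^ 2 / 32
      - Real.log 2 / 2 * (polylog 2 (-I)).im + (polylog 3 ((1 + I) / 2)).im := by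
  have hw : -I / (-I - 1) = (1 + I) / 2 := by
    have : -I - 1 ≠ 0 := sub_one_ne_zero_of_re_lt_one (by simp)
    field_simp
    linear_combination I_sq
  have hcube (a b : ℝ) : (((a + b * I : ℂ)) ^ 3).im = 3 * a ^ 2 * b - b ^ 3 := by
    simp only [pow_succ, pow_zero, one_mul, add_re, add_im, mul_re, mul_im, ofReal_re, ofReal_im,
      I_re, I_im]
    ring
  have hdiv (x : ℂ) : (x / 6).im = x.im / 6 := Complex.div_ofNat_im x 6
  rw [nielsenPolylog, hw, log_one_sub_neg_I, Complex.sub_im, Complex.sub_im, Complex.add_im, hdiv,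
    hcube, Complex.mul_im, polylog_two_neg_I_re, polylog_three_neg_I_im]
  simp only [add_re, add_im, ofReal_re, ofReal_im, re_ofReal_mul, im_ofReal_mul, I_re, I_im]
  ring

theorem centralBinomPolylog_three_one :
    centralBinomPolylog 3 1 =
      -(π ^ 3 / 32) - π * Real.log 2 ^ 2 / 8 + 4 * (polylog 3 ((1 + I) / 2)).im := by
  have h := centralBinomPolylog_three_two_mul_div_one_add_sq (t := 1) (by simp)
  norm_num only [ofReal_one, one_mul] at h
  rw [h, nielsenPolylog_neg_I_im, polylog_three_neg_I_im]
  ring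

end RationalSubstitution

/-- `∑_{n≥0} 4^n / (binom(2n,n)(2n+1)³)
    = −π³/32 − π log²2 / 8 + 4 Im Li₃((1+i)/2)`. -/
theorem stmt9 :
    (∑' n : ℕ, (4 : ℝ) ^ n / ((Nat.choose (2 * n) n : ℝ) * (2 * (n : ℝ) + 1) ^ 3)) =
    -(π ^ 3 / 32) - π * Real.log 2 ^ 2 / 8 +
      4 * (∑' n : ℕ, ((1 + Complex.I) / 2) ^ (n + 1) / ((n : ℂ) + 1) ^ 3).im := by
  have hseries : centralBinomPolylog 3 1 =
      ∑' n : ℕ, (4 : ℝ) ^ n / ((Nat.choose (2 * n) n : ℝ) * (2 * (n : ℝ) + 1) ^ 3) := by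
    simp [centralBinomPolylog, weightedPolylog, fourPowDivCentralBinom,
      Nat.centralBinom_eq_two_mul_choose, div_div]
  rw [← hseries, ← polylog_eq_tsum]
  exact centralBinomPolylog_three_one
end

section
/- We have ∑_{n₁ > n₂ ≥ 0} 4^{n₁} / (binom(2n₁, n₁) · n₁² · (2n₂+1)) = 7 ζ(3), where ζ(3) = ∑_{n=1}^∞ 1/n³ and the double sum is over integers n₁ > n₂ ≥ 0. -/
open Real

/-
Both sides equal `2 ∫₀^∞ u² / sinh u du`. Expanding `1 / sinh u` in powers of `exp (-u)` gives
`4 Γ(3) ∑ 1 / (2k+1)³ = 7 ζ(3)`. Expanding instead `u² = (artanh (tanh u))²` in powers of `tanh u`,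
where the partial fractions `1/((2i+1)(2j+1)) = (1/(2i+1) + 1/(2j+1)) / (2(i+j+1))` and the symmetry
`i ↔ j` produce the weights `1/((i+j+1)(2j+1))`, leaves the Wallis-type integrals of
`tanh u ^ (2n-1) / cosh u`, whose values are `4ⁿ / (2n binom(2n, n))`. The index pair is
`n₁ = i + j + 1`, `n₂ = j`.
-/

namespace CentralBinomZeta

open MeasureTheory Set Filter Topology
open scoped Nat

theorem hasSum_of_hasSum_add_swap {α : Type*} {g : α × α → ℝ} {s : ℝ} (hg : 0 ≤ g)
    (h : HasSum (fun p ↦ g p + g p.swap) (2 * s)) : HasSum g s := by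
  have hsum : Summable g :=
    .of_nonneg_of_le hg (fun p ↦ le_add_of_nonneg_right (hg p.swap)) h.summable
  have hswap : HasSum (fun p : α × α ↦ g p.swap) (∑' p, g p) :=
    (Equiv.prodComm α α).hasSum_iff.2 hsum.hasSum
  have hs : 2 * s = ∑' p, g p + ∑' p, g p := h.unique (hsum.hasSum.add hswap)
  convert! hsum.hasSum using 1
  linarith

theorem hasSum_integral_of_nonneg {α ι : Type*} [Countable ι] [MeasurableSpace α] {μ : Measure α}
    {F : ι → α → ℝ} {f : α → ℝ} (hF : ∀ i, AEStronglyMeasurable (F i) μ)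
    (hF_nonneg : ∀ i, 0 ≤ᵐ[μ] F i) (hf : Integrable f μ)
    (h : ∀ᵐ a ∂μ, HasSum (fun i ↦ F i a) (f a)) :
    HasSum (fun i ↦ ∫ a, F i a ∂μ) (∫ a, f a ∂μ) := by
  refine hasSum_integral_of_dominated_convergence F hF (fun i ↦ ?_)
    (h.mono fun _ ha ↦ ha.summable) (hf.congr (h.mono fun _ ha ↦ ha.tsum_eq.symm)) h
  filter_upwards [hF_nonneg i] with a ha using (norm_of_nonneg ha).le

theorem summable_one_div_add_one_pow {k : ℕ} (hk : 1 < k) :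
    Summable fun n : ℕ ↦ 1 / ((n : ℝ) + 1) ^ k := by
  simpa using (summable_nat_add_iff 1).2 (summable_one_div_nat_pow.2 hk)

theorem hasSum_one_div_odd_pow {k : ℕ} (hk : 1 < k) :
    HasSum (fun n : ℕ ↦ 1 / (2 * (n : ℝ) + 1) ^ k)
      ((1 - 1 / 2 ^ k) * ∑' n : ℕ, 1 / ((n : ℝ) + 1) ^ k) := by
  set f : ℕ → ℝ := fun n ↦ 1 / ((n : ℝ) + 1) ^ k
  have hf : Summable f := summable_one_div_add_one_pow hk
  have f_even (n : ℕ) : f (2 * n) = 1 / (2 * (n : ℝ) + 1) ^ k := by simp [f]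
  have f_odd (n : ℕ) : f (2 * n + 1) = 1 / 2 ^ k * f n := by
    simp only [f, one_div, ← mul_inv, ← mul_pow]
    push_cast
    ring
  have even_summable : Summable fun n ↦ f (2 * n) :=
    hf.comp_injective fun _ _ h ↦ by simpa using h
  have odd_summable : Summable fun n ↦ f (2 * n + 1) := by
    simpa only [f_odd] using hf.mul_left (1 / 2 ^ k)
  have split := tsum_even_add_odd even_summable odd_summable
  simp only [f_odd, tsum_mul_left] at split
  have key : ∑' n, f (2 * n) = (1 - 1 / 2 ^ k) * ∑' n, f n := by linarith
  simpa only [← key, f_even] using even_summable.hasSum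

theorem hasSum_two_mul_exp_neg_odd_mul {t : ℝ} (ht : 0 < t) :
    HasSum (fun k : ℕ ↦ 2 * exp (-(2 * k + 1) * t)) (sinh t)⁻¹ := by
  have hlt : exp (-(2 * t)) < 1 := exp_lt_one_iff.2 (by linarith)
  have hsinh : 1 - exp (-(2 * t)) = 2 * exp (-t) * sinh t := by
    have hinv : exp (-t) * exp t = 1 := by rw [← exp_add, neg_add_cancel, exp_zero]
    rw [sinh_eq, two_mul, neg_add, exp_add]
    linear_combination -hinv
  convert! (hasSum_geometric_of_lt_one (exp_pos _).le hlt).mul_left (2 * exp (-t)) using 1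
  · ext k
    rw [← exp_nat_mul, mul_assoc, ← exp_add]
    congr 2
    ring
  · have := (sinh_pos_iff.2 ht).ne'
    rw [hsinh]
    field_simp

theorem hasSum_mellin_inv_sinh {s : ℂ} (hs : 1 < s.re) :
    HasSum (fun k : ℕ ↦ Complex.Gamma s * 2 / ((2 * k + 1 : ℝ) : ℂ) ^ s)
      (mellin (fun t ↦ ((sinh t)⁻¹ : ℝ)) s) := by
  refine hasSum_mellin (fun k ↦ Or.inr (by positivity)) (by linarith) (fun t ht ↦ ?_) ?_
  · exact_mod_cast hasSum_two_mul_exp_neg_odd_mul ht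
  · have hodd : Summable fun k : ℕ ↦ 1 / ((2 * k + 1 : ℕ) : ℝ) ^ s.re :=
      (summable_one_div_nat_rpow.2 hs).comp_injective (i := fun k ↦ 2 * k + 1)
        fun _ _ h ↦ by simpa using h
    convert! hodd.mul_left 2 using 2 with k
    push_cast
    rw [Complex.norm_ofNat, mul_one_div]

theorem hasSum_integral_pow_div_sinh {n : ℕ} (hn : n ≠ 0) :
    HasSum (fun k : ℕ ↦ 2 * (n ! : ℝ) * (1 / (2 * (k : ℝ) + 1) ^ (n + 1)))
      (∫ t in Ioi 0, t ^ n / sinh t) := by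
  have hs : 1 < ((n : ℂ) + 1).re := by
    simpa using Nat.pos_of_ne_zero hn
  rw [← Complex.hasSum_ofReal, ← integral_complex_ofReal]
  convert! hasSum_mellin_inv_sinh hs using 1
  · ext k
    rw [Complex.Gamma_nat_eq_factorial, ← Nat.cast_add_one, Complex.cpow_natCast]
    push_cast
    ring
  · simp [mellin, div_eq_mul_inv]

theorem integral_pow_div_sinh {n : ℕ} (hn : n ≠ 0) :
    ∫ t in Ioi 0, t ^ n / sinh t =
      2 * n ! * ((1 - 1 / 2 ^ (n + 1)) * ∑' m : ℕ, 1 / ((m : ℝ) + 1) ^ (n + 1)) :=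
  (hasSum_integral_pow_div_sinh hn).unique ((hasSum_one_div_odd_pow (by lia)).mul_left _)

theorem integrableOn_pow_div_sinh {n : ℕ} (hn : n ≠ 0) :
    IntegrableOn (fun t ↦ t ^ n / sinh t) (Ioi 0) := by
  -- A non-integrable function would have integral `0`, whereas the series is positive.
  refine .of_integral_ne_zero (ne_of_gt ?_)
  have h := hasSum_integral_pow_div_sinh hn
  rw [← h.tsum_eq]
  exact h.summable.tsum_pos (fun k ↦ by positivity) 0 (by positivity)

theorem tanh_pos {u : ℝ} (hu : 0 < u) : 0 < tanh u := by
  rw [tanh_eq_sinh_div_cosh]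
  exact div_pos (sinh_pos_iff.2 hu) (cosh_pos u)

theorem hasDerivAt_tanh (u : ℝ) : HasDerivAt tanh (1 - tanh u ^ 2) u := by
  have h := (hasDerivAt_sinh u).div (hasDerivAt_cosh u) (cosh_pos u).ne'
  rw [funext tanh_eq_sinh_div_cosh]
  convert! h using 1
  have := (cosh_pos u).ne'
  field_simp

theorem continuous_tanh_pow_div_cosh (n : ℕ) : Continuous fun u ↦ tanh u ^ n / cosh u := by
  have : Continuous tanh := continuous_iff_continuousAt.2 fun u ↦ (hasDerivAt_tanh u).continuousAt
  exact (this.pow n).div continuous_cosh fun u ↦ (cosh_pos u).ne'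

theorem norm_tanh_pow_div_cosh_le (n : ℕ) (u : ℝ) : ‖tanh u ^ n / cosh u‖ ≤ 2 * exp (-u) := by
  have hcosh : 1 / cosh u ≤ 2 * exp (-u) := by
    have hinv : exp (-u) * exp u = 1 := by rw [← exp_add, neg_add_cancel, exp_zero]
    rw [div_le_iff₀ (cosh_pos u), cosh_eq]
    nlinarith [sq_nonneg (exp (-u))]
  calc ‖tanh u ^ n / cosh u‖ = |tanh u| ^ n / cosh u := by
        rw [norm_eq_abs, abs_div, abs_pow, abs_of_pos (cosh_pos u)]
    _ ≤ 1 / cosh u := by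
        have := cosh_pos u
        gcongr
        exact pow_le_one₀ (abs_nonneg _) (abs_tanh_lt_one u).le
    _ ≤ 2 * exp (-u) := hcosh

theorem integrableOn_tanh_pow_div_cosh (n : ℕ) :
    IntegrableOn (fun u ↦ tanh u ^ n / cosh u) (Ioi 0) :=
  ((integrableOn_exp_neg_Ioi 0).const_mul 2).mono'
    (continuous_tanh_pow_div_cosh n).aestronglyMeasurable
    (ae_of_all _ (norm_tanh_pow_div_cosh_le n))

theorem tendsto_tanh_pow_div_cosh_atTop (n : ℕ) :
    Tendsto (fun u ↦ tanh u ^ n / cosh u) atTop (𝓝 0) :=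
  squeeze_zero_norm (norm_tanh_pow_div_cosh_le n) <| by
    simpa using tendsto_exp_neg_atTop_nhds_zero.const_mul 2

theorem hasDerivAt_tanh_pow_div_cosh (n : ℕ) (u : ℝ) :
    HasDerivAt (fun u ↦ tanh u ^ n / cosh u)
      (n * (tanh u ^ (n - 1) / cosh u) - (n + 1) * (tanh u ^ (n + 1) / cosh u)) u := by
  convert! ((hasDerivAt_tanh u).pow n).div (hasDerivAt_cosh u) (cosh_pos u).ne' using 1
  have hcosh := (cosh_pos u).ne'
  have hsinh : sinh u = tanh u * cosh u := by
    rw [tanh_eq_sinh_div_cosh, div_mul_cancel₀ _ hcosh]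
  rw [hsinh, Pi.pow_apply]
  rcases n with _ | n
  · simp only [pow_zero]
    push_cast
    field_simp
    ring
  · simp only [Nat.add_sub_cancel]
    push_cast
    field_simp
    ring

-- The term `0 ^ n` is the boundary value of `tanh u ^ n / cosh u` at `u = 0`.
theorem succ_mul_integral_tanh_pow_succ_div_cosh (n : ℕ) :
    (n + 1) * ∫ u in Ioi 0, tanh u ^ (n + 1) / cosh u =
      n * (∫ u in Ioi 0, tanh u ^ (n - 1) / cosh u) + 0 ^ n := by
  have integrable (c : ℝ) (m : ℕ) := (integrableOn_tanh_pow_div_cosh m).const_mul c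
  have h := integral_Ioi_of_hasDerivAt_of_tendsto' (a := 0)
    (fun u _ ↦ hasDerivAt_tanh_pow_div_cosh n u) ((integrable _ _).sub (integrable _ _))
    (tendsto_tanh_pow_div_cosh_atTop n)
  rw [integral_sub (integrable _ _) (integrable _ _), integral_const_mul, integral_const_mul,
    tanh_zero, cosh_zero, div_one] at h
  linarith

theorem integral_tanh_pow_odd_div_cosh (n : ℕ) :
    ∫ u in Ioi 0, tanh u ^ (2 * n + 1) / cosh u =
      4 ^ (n + 1) / (2 * (n + 1) * (n + 1).centralBinom) := by
  induction n with
  | zero =>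
    have hbase : ∫ u in Ioi 0, tanh u ^ 1 / cosh u = 1 := by
      simpa using succ_mul_integral_tanh_pow_succ_div_cosh 0
    rw [mul_zero, zero_add, hbase]
    norm_num [Nat.centralBinom]
  | succ n ih =>
    have hrec := succ_mul_integral_tanh_pow_succ_div_cosh (2 * (n + 1))
    rw [show 2 * (n + 1) - 1 = 2 * n + 1 by lia, ih, zero_pow (by lia), add_zero] at hrec
    have hbinom : ((n : ℝ) + 1 + 1) * (n + 1 + 1).centralBinom =
        2 * (2 * (n + 1) + 1) * (n + 1).centralBinom := by
      exact_mod_cast Nat.succ_mul_centralBinom_succ (n + 1)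
    have hpos : (0 : ℝ) < (n + 1).centralBinom := by exact_mod_cast Nat.centralBinom_pos _
    push_cast at hrec ⊢
    rw [mul_assoc 2, hbinom]
    field_simp at hrec ⊢
    linear_combination 4 * hrec

theorem hasSum_artanh {x : ℝ} (hx : |x| < 1) :
    HasSum (fun k : ℕ ↦ x ^ (2 * k + 1) / (2 * k + 1)) (artanh x) := by
  obtain ⟨hx₁, hx₂⟩ := abs_lt.1 hx
  rw [artanh_eq_half_log ⟨hx₁.le, hx₂.le⟩, log_div (by linarith) (by linarith)]
  convert! (hasSum_log_sub_log_of_abs_lt_one hx).mul_left (1 / 2) using 2 with k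
  ring

theorem hasSum_artanh_sq {x : ℝ} (hx : |x| < 1) :
    HasSum (fun p : ℕ × ℕ ↦ x ^ (2 * (p.1 + p.2 + 1)) / ((p.1 + p.2 + 1) * (2 * p.2 + 1)))
      (artanh x ^ 2) := by
  have h := hasSum_artanh hx
  have hprod := (h.mul h (summable_mul_of_summable_norm h.summable.norm h.summable.norm)).mul_left 2
  refine hasSum_of_hasSum_add_swap (fun p ↦ div_nonneg ?_ (by positivity)) ?_
  · exact (even_two_mul _).pow_nonneg x
  · rw [sq]
    convert! hprod using 2 with p
    rw [p.fst_swap, p.snd_swap, add_comm p.2, add_comm (p.2 : ℝ)]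
    field_simp
    ring

theorem hasSum_sq_div_sinh {u : ℝ} (hu : u ≠ 0) :
    HasSum (fun p : ℕ × ℕ ↦
      1 / ((p.1 + p.2 + 1) * (2 * p.2 + 1) : ℝ) * (tanh u ^ (2 * (p.1 + p.2) + 1) / cosh u))
      (u ^ 2 / sinh u) := by
  have h := (hasSum_artanh_sq (abs_tanh_lt_one u)).div_const (sinh u)
  rw [artanh_tanh] at h
  convert! h using 2 with p
  have hcosh := (cosh_pos u).ne'
  have hsinh := sinh_ne_zero.2 hu
  rw [mul_add_one 2 (p.1 + p.2), pow_succ _ (2 * (p.1 + p.2) + 1), tanh_eq_sinh_div_cosh]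
  field_simp

theorem hasSum_four_pow_div_centralBinom :
    HasSum (fun p : ℕ × ℕ ↦ (4 : ℝ) ^ (p.1 + p.2 + 1) /
      ((p.1 + p.2 + 1).centralBinom * ((p.1 + p.2 + 1 : ℕ) : ℝ) ^ 2 * (2 * p.2 + 1)))
      (2 * ∫ u in Ioi 0, u ^ 2 / sinh u) := by
  have h := hasSum_integral_of_nonneg (μ := volume.restrict (Ioi 0))
    (fun p ↦ ((continuous_tanh_pow_div_cosh _).const_mul _).aestronglyMeasurable)
    (fun p ↦ (ae_restrict_mem measurableSet_Ioi).mono fun u hu ↦ ?_)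
    (integrableOn_pow_div_sinh two_ne_zero)
    ((ae_restrict_mem measurableSet_Ioi).mono fun u hu ↦ hasSum_sq_div_sinh (ne_of_gt hu))
  · convert! h.mul_left 2 using 2 with p
    rw [integral_const_mul, integral_tanh_pow_odd_div_cosh]
    push_cast
    field_simp
  · have := tanh_pos hu
    have := cosh_pos u
    simp only [Pi.zero_apply]
    positivity

/-- The parametrisation `(i, j) ↦ (i + j + 1, j)` of the pairs `n₁ > n₂ ≥ 0`, which turns a sum over
such pairs into a sum over `ℕ × ℕ`. -/
def prodEquivSndLtFst : ℕ × ℕ ≃ {p : ℕ × ℕ // p.2 < p.1} where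
  toFun p := ⟨(p.1 + p.2 + 1, p.2), by simp only; lia⟩
  invFun q := (q.1.1 - q.1.2 - 1, q.1.2)
  left_inv p := Prod.ext (by simp only; lia) rfl
  right_inv q := Subtype.ext (Prod.ext (by have := q.2; simp only; lia) rfl)

end CentralBinomZeta

/-- `∑_{n₁ > n₂ ≥ 0} 4^{n₁}/(binom(2n₁,n₁) n₁² (2n₂+1)) = 7ζ(3)`. -/
theorem stmt11 :
    (∑' p : {p : ℕ × ℕ // p.2 < p.1},
      (4 : ℝ) ^ p.1.1 /
        ((Nat.choose (2 * p.1.1) p.1.1 : ℝ) * (p.1.1 : ℝ) ^ 2 * (2 * (p.1.2 : ℝ) + 1))) =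
    7 * ∑' n : ℕ, 1 / ((n : ℝ) + 1) ^ 3 := by
  rw [← CentralBinomZeta.prodEquivSndLtFst.tsum_eq]
  refine CentralBinomZeta.hasSum_four_pow_div_centralBinom.tsum_eq.trans ?_
  rw [CentralBinomZeta.integral_pow_div_sinh two_ne_zero, Nat.factorial_two]
  push_cast
  ring
end
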